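/- Let ϑ₀, ϑ₁, ϑ₂ be Beurling weights on ℝ^d with ϑ₁ ≺ ϑ₀, and let 1 < p, q, r < ∞. Then A^{p,1,q,r}_{ϑ₁,ϑ₂}(ℝ^d) is a Banach L¹_{ϑ₀}(ℝ^d)-module under convolution: there exists a constant C > 0 such that for every f ∈ A^{p,1,q,r}_{ϑ₁,ϑ₂}(ℝ^d) and every g ∈ L¹_{ϑ₀}(ℝ^d), the convolution f∗g belongs to A^{p,1,q,r}_{ϑ₁,ϑ₂}(ℝ^d) and ‖f∗g‖_A ≤ C·‖f‖_A·‖g‖_{1,ϑ₀}. -/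

import Mathlib

open MeasureTheory Filter Topology
open scoped ENNReal NNReal BigOperators

noncomputable section

/-- The unit cube `α + [0,1)^d` at the integer point `α ∈ ℤ^d`. -/
def cube {d : ℕ} (α : Fin d → ℤ) : Set (Fin d → ℝ) :=
  Set.univ.pi fun i => Set.Ico (α i : ℝ) ((α i : ℝ) + 1)

/-- The weighted amalgam norm `‖f‖_{pq,ω}` of the space `(L^p_ω, ℓ^q)`. -/
def amalgamNorm {d : ℕ} (p q : ℝ) (ω : (Fin d → ℝ) → ℝ) (f : (Fin d → ℝ) → ℂ) : ℝ≥0∞ :=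
  (∑' α : Fin d → ℤ,
      (eLpNorm (fun x => ω x • f x) (ENNReal.ofReal p) (volume.restrict (cube α))) ^ q) ^ (1 / q)

/-- Membership in the weighted amalgam space `(L^p_ω, ℓ^q)`. -/
def MemAmalgam {d : ℕ} (p q : ℝ) (ω : (Fin d → ℝ) → ℝ) (f : (Fin d → ℝ) → ℂ) : Prop :=
  Measurable f ∧ amalgamNorm p q ω f < ⊤

/-- A Beurling weight: measurable, `ϑ ≥ 1` and submultiplicative. -/
def IsBeurling {d : ℕ} (ϑ : (Fin d → ℝ) → ℝ) : Prop :=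
  Measurable ϑ ∧ (∀ x, 1 ≤ ϑ x) ∧ ∀ x y, ϑ (x + y) ≤ ϑ x * ϑ y

/-- The Fourier transform `f̂(ξ) = ∫ f(x) e^{-2πi⟨x,ξ⟩} dx`. -/
def fourierT {d : ℕ} (f : (Fin d → ℝ) → ℂ) (ξ : Fin d → ℝ) : ℂ :=
  ∫ x : Fin d → ℝ,
    Complex.exp (-(2 * (Real.pi : ℂ) * Complex.I * ∑ i, (x i : ℂ) * (ξ i : ℂ))) * f x

/-- The norm of `A^{p,1,q,r}_{ϑ₁,ϑ₂}(ℝ^d)`. -/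
def ANorm {d : ℕ} (p q r : ℝ) (ϑ₁ ϑ₂ : (Fin d → ℝ) → ℝ) (f : (Fin d → ℝ) → ℂ) : ℝ≥0∞ :=
  amalgamNorm p 1 ϑ₁ f + amalgamNorm q r ϑ₂ (fourierT f)

/-- Membership in `A^{p,1,q,r}_{ϑ₁,ϑ₂}(ℝ^d)`. -/
def MemA {d : ℕ} (p q r : ℝ) (ϑ₁ ϑ₂ : (Fin d → ℝ) → ℝ) (f : (Fin d → ℝ) → ℂ) : Prop :=
  MemAmalgam p 1 ϑ₁ f ∧ MemAmalgam q r ϑ₂ (fourierT f)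

/-- Convolution `(f∗g)(x) = ∫ f(x−t)g(t) dt`. -/
def convF {d : ℕ} (f g : (Fin d → ℝ) → ℂ) (x : Fin d → ℝ) : ℂ :=
  ∫ t : Fin d → ℝ, f (x - t) * g t

/-- `ϑ ≺ ϑ'` : domination of weights up to a constant. -/
def Prec {d : ℕ} (ϑ ϑ' : (Fin d → ℝ) → ℝ) : Prop :=
  ∃ C : ℝ, 0 < C ∧ ∀ x, ϑ x ≤ C * ϑ' x

/-- The Beurling–Domar condition `∑_{n≥1} log ϑ(nx)/n² < ∞`. -/
def BeurlingDomar {d : ℕ} (ϑ : (Fin d → ℝ) → ℝ) : Prop :=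
  ∀ x : Fin d → ℝ, Summable fun n : ℕ => Real.log (ϑ ((n : ℝ) • x)) / (n : ℝ) ^ 2

/-- `w` does not tend to zero as `|x| → ∞`. -/
def NotVanishingAtInfty {d : ℕ} (w : (Fin d → ℝ) → ℝ) : Prop :=
  ∃ δ : ℝ, 0 < δ ∧ ∀ R : ℝ, 0 < R → ∃ x : Fin d → ℝ, R < ‖x‖ ∧ δ ≤ w x

end

lemma mink_aux {X T : Type*} [MeasurableSpace X] [MeasurableSpace T] (μ : Measure X)
    (ν : Measure T) [SFinite μ] [SFinite ν] (p : ℝ) (hp : 1 < p) (K : X → T → ℝ≥0∞)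
    (hK : Measurable (Function.uncurry K)) (c : T → ℝ≥0∞) (hcm : Measurable c)
    (hc0 : ∀ t, c t ≠ 0) (hct : ∀ t, c t ≠ ⊤)
    (hc : ∀ t, ∫⁻ x, K x t ^ p ∂μ ≤ c t ^ p) :
    ∫⁻ x, (∫⁻ t, K x t ∂ν) ^ p ∂μ ≤ (∫⁻ t, c t ∂ν) ^ p := by
  have hp0 : 0 < p := by linarith
  have hpq : p.HolderConjugate p.conjExponent := Real.HolderConjugate.conjExponent hp
  set q := p.conjExponent with hq
  have hq0 : 0 < q := hpq.symm.pos
  have hpq' : p / q = p - 1 := by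
    rw [hq, Real.conjExponent]; field_simp
  have key : ∀ x, (∫⁻ t, K x t ∂ν) ^ p ≤
      (∫⁻ t, c t ^ (1 - p) * K x t ^ p ∂ν) * (∫⁻ t, c t ∂ν) ^ (p - 1) := by
    intro x
    have hKx : Measurable (K x) := hK.comp measurable_prodMk_left
    have h1 := ENNReal.lintegral_mul_le_Lp_mul_Lq ν hpq
      (f := fun t => c t ^ (-(1 / q)) * K x t) (g := fun t => c t ^ (1 / q))
      ((hcm.pow_const _).mul hKx).aemeasurable (hcm.pow_const _).aemeasurable
    have e1 : ∀ t, ((fun t => c t ^ (-(1 / q)) * K x t) * (fun t => c t ^ (1 / q))) t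
        = K x t := by
      intro t
      simp only [Pi.mul_apply]
      rw [mul_right_comm, ← ENNReal.rpow_add _ _ (hc0 t) (hct t)]
      simp
    have e2 : ∀ t, (c t ^ (-(1 / q)) * K x t) ^ p = c t ^ (1 - p) * K x t ^ p := by
      intro t
      rw [ENNReal.mul_rpow_of_nonneg _ _ hp0.le, ← ENNReal.rpow_mul]
      congr 2
      have : -(1 / q) * p = - (p / q) := by ring
      rw [this, hpq']; ring
    have e3 : ∀ t, (c t ^ (1 / q)) ^ q = c t := by
      intro t
      rw [← ENNReal.rpow_mul]
      have : 1 / q * q = 1 := by field_simp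
      rw [this, ENNReal.rpow_one]
    simp only [e1, e2, e3] at h1
    calc (∫⁻ t, K x t ∂ν) ^ p ≤ _ := ENNReal.rpow_le_rpow h1 hp0.le
      _ = _ := by
        rw [ENNReal.mul_rpow_of_nonneg _ _ hp0.le, ← ENNReal.rpow_mul, ← ENNReal.rpow_mul]
        have : 1 / p * p = 1 := by field_simp
        rw [this, ENNReal.rpow_one]
        congr 2
        rw [← hpq']; ring
  have hm : Measurable (fun z : X × T => c z.2 ^ (1 - p) * K z.1 z.2 ^ p) :=
    ((hcm.comp measurable_snd).pow_const _).mul (hK.pow_const _)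
  calc ∫⁻ x, (∫⁻ t, K x t ∂ν) ^ p ∂μ
      ≤ ∫⁻ x, (∫⁻ t, c t ^ (1 - p) * K x t ^ p ∂ν) * (∫⁻ t, c t ∂ν) ^ (p - 1) ∂μ :=
        lintegral_mono key
    _ = (∫⁻ x, (∫⁻ t, c t ^ (1 - p) * K x t ^ p ∂ν) ∂μ) * (∫⁻ t, c t ∂ν) ^ (p - 1) := by
        rw [lintegral_mul_const]
        exact hm.lintegral_prod_right'
    _ = (∫⁻ t, (∫⁻ x, c t ^ (1 - p) * K x t ^ p ∂μ) ∂ν) * (∫⁻ t, c t ∂ν) ^ (p - 1) := by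
        rw [lintegral_lintegral_swap]
        exact hm.aemeasurable
    _ ≤ (∫⁻ t, c t ∂ν) * (∫⁻ t, c t ∂ν) ^ (p - 1) := by
        gcongr with t
        have hKt : Measurable (fun x => K x t) := hK.comp measurable_prodMk_right
        rw [lintegral_const_mul _ (hKt.pow_const _)]
        calc c t ^ (1 - p) * ∫⁻ x, K x t ^ p ∂μ ≤ c t ^ (1 - p) * c t ^ p := by
              gcongr; exact hc t
          _ = c t := by
              rw [← ENNReal.rpow_add _ _ (hc0 t) (hct t)]; simp
    _ = (∫⁻ t, c t ∂ν) ^ p := by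
        conv_lhs => rw [← ENNReal.rpow_one (∫⁻ t, c t ∂ν), ← ENNReal.rpow_mul, one_mul]
        rw [← ENNReal.rpow_add_of_nonneg _ _ (by norm_num) (by linarith)]
        congr 1; ring

/-- The Minkowski integral inequality with a majorant. -/
lemma mink_maj {X T : Type*} [MeasurableSpace X] [MeasurableSpace T] (μ : Measure X)
    (ν : Measure T) [SFinite μ] [IsFiniteMeasure ν] (p : ℝ) (hp : 1 < p) (K : X → T → ℝ≥0∞)
    (hK : Measurable (Function.uncurry K)) (c : T → ℝ≥0∞) (hcm : Measurable c)
    (hct : ∀ t, c t ≠ ⊤)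
    (hc : ∀ t, ∫⁻ x, K x t ^ p ∂μ ≤ c t ^ p) :
    (∫⁻ x, (∫⁻ t, K x t ∂ν) ^ p ∂μ) ^ (1 / p) ≤ ∫⁻ t, c t ∂ν := by
  have hp0 : 0 < p := by linarith
  have main : ∀ ε : ℝ≥0, 0 < ε →
      (∫⁻ x, (∫⁻ t, K x t ∂ν) ^ p ∂μ) ^ (1 / p) ≤ (∫⁻ t, c t ∂ν) + ε * ν Set.univ := by
    intro ε hε
    have h := mink_aux μ ν p hp K hK (fun t => c t + ε) (hcm.add_const _)
      (fun t => by simp [hε.ne']) (fun t => by simp [hct t])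
      (fun t => (hc t).trans (by gcongr; exact le_self_add))
    rw [lintegral_add_right _ measurable_const, lintegral_const] at h
    calc _ ≤ _ := ENNReal.rpow_le_rpow h (by positivity : 0 ≤ 1 / p)
      _ = _ := by
        rw [← ENNReal.rpow_mul]
        have : p * (1 / p) = 1 := by field_simp
        rw [this, ENNReal.rpow_one]
  have ht : Tendsto (fun ε : ℝ≥0 => (∫⁻ t, c t ∂ν) + (ε : ℝ≥0∞) * ν Set.univ) (𝓝[>] 0)
      (𝓝 ((∫⁻ t, c t ∂ν) + ((0 : ℝ≥0) : ℝ≥0∞) * ν Set.univ)) := by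
    have : Tendsto (fun ε : ℝ≥0 => (ε : ℝ≥0∞)) (𝓝[>] 0) (𝓝 ((0 : ℝ≥0) : ℝ≥0∞)) :=
      (ENNReal.continuous_coe.tendsto 0).mono_left nhdsWithin_le_nhds
    exact (ENNReal.Tendsto.mul_const this (Or.inr (measure_ne_top _ _))).const_add _
  simp only [ENNReal.coe_zero, zero_mul, add_zero] at ht
  refine ge_of_tendsto ht ?_
  filter_upwards [self_mem_nhdsWithin] with ε hε using main ε hε

lemma rpow_sum_le_aux {ι : Type*} (s : Finset ι) (a : ι → ℝ≥0∞) (z : ℝ) (hz : 0 < z)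
    (hz1 : z ≤ 1) : (∑ i ∈ s, a i) ^ z ≤ ∑ i ∈ s, a i ^ z := by
  classical
  induction s using Finset.induction_on with
  | empty => simp [hz]
  | insert i s hi ih =>
    rw [Finset.sum_insert hi, Finset.sum_insert hi]
    exact (ENNReal.rpow_add_le_add_rpow _ _ hz.le hz1).trans (by gcongr)

lemma mem_cube_iff {d : ℕ} (α : Fin d → ℤ) (x : Fin d → ℝ) :
    x ∈ cube α ↔ (fun i => ⌊x i⌋) = α := by
  simp only [cube, Set.mem_univ_pi, Set.mem_Ico, funext_iff, Int.floor_eq_iff]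

lemma measurableSet_cube {d : ℕ} (α : Fin d → ℤ) : MeasurableSet (cube α) :=
  MeasurableSet.univ_pi fun _ => measurableSet_Ico

lemma volume_cube {d : ℕ} (α : Fin d → ℤ) : volume (cube α) = 1 := by
  simp [cube, Real.volume_pi_Ico, volume_pi_pi]

lemma lintegral_eq_tsum_cube {d : ℕ} (F : (Fin d → ℝ) → ℝ≥0∞) :
    ∫⁻ x, F x = ∑' α : Fin d → ℤ, ∫⁻ x in cube α, F x := by
  rw [← lintegral_iUnion measurableSet_cube, ← setLIntegral_univ]
  · congr 2
    ext x
    simp [mem_cube_iff]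
  · intro α β hαβ
    refine Set.disjoint_left.2 fun x h1 h2 => hαβ ?_
    rw [mem_cube_iff] at h1 h2
    exact h1.symm.trans h2

/-- the integer vector of a 0-1 vector -/
def bits {d : ℕ} (e : Fin d → Fin 2) : Fin d → ℤ := fun i => ((e i : ℕ) : ℤ)

lemma shift_cube {d : ℕ} (F : (Fin d → ℝ) → ℝ≥0∞) (hF : Measurable F) (α : Fin d → ℤ)
    (t : Fin d → ℝ) :
    ∫⁻ x in cube α, F (x - t) ≤
      ∑ e : Fin d → Fin 2, ∫⁻ x in cube (α - (fun i => ⌊t i⌋) - bits e), F x := by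
  have h1 : ∀ x, (cube α).indicator (fun x => F (x - t)) x ≤
      ∑ e : Fin d → Fin 2, (cube (α - (fun i => ⌊t i⌋) - bits e)).indicator F (x - t) := by
    intro x
    by_cases hx : x ∈ cube α
    · rw [Set.indicator_of_mem hx]
      have : ∃ e : Fin d → Fin 2, x - t ∈ cube (α - (fun i => ⌊t i⌋) - bits e) := by
        have : ∀ i, ∃ e : Fin 2, ⌊x i - t i⌋ = α i - ⌊t i⌋ - ((e : ℕ) : ℤ) := by
          intro i
          rw [mem_cube_iff] at hx
          have hi : ⌊x i⌋ = α i := congrFun hx i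
          have a1 := Int.floor_le (x i)
          have a2 := Int.lt_floor_add_one (x i)
          have b1 := Int.floor_le (t i)
          have b2 := Int.lt_floor_add_one (t i)
          rw [hi] at a1 a2
          by_cases h : ((α i : ℝ) - ⌊t i⌋) ≤ x i - t i
          · refine ⟨0, ?_⟩
            rw [Int.floor_eq_iff]
            push_cast
            constructor <;> simp <;> linarith
          · refine ⟨1, ?_⟩
            rw [Int.floor_eq_iff]
            push_cast
            constructor <;> simp <;> linarith
        choose e he using this
        refine ⟨e, ?_⟩
        rw [mem_cube_iff]
        funext i
        simpa [bits] using he i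
      obtain ⟨e, he⟩ := this
      calc F (x - t) = (cube (α - (fun i => ⌊t i⌋) - bits e)).indicator F (x - t) := by
            rw [Set.indicator_of_mem he]
        _ ≤ _ := Finset.single_le_sum
            (f := fun e => (cube (α - (fun i => ⌊t i⌋) - bits e)).indicator F (x - t))
            (fun _ _ => zero_le) (Finset.mem_univ e)
    · rw [Set.indicator_of_notMem hx]; exact zero_le
  rw [← lintegral_indicator (measurableSet_cube α)]
  calc _ ≤ _ := lintegral_mono h1
    _ = ∑ e : Fin d → Fin 2,
        ∫⁻ x, (cube (α - (fun i => ⌊t i⌋) - bits e)).indicator F (x - t) := by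
      rw [lintegral_finsetSum]
      intro e _
      exact (hF.indicator (measurableSet_cube _)).comp (measurable_id.sub_const t)
    _ = _ := by
      congr 1; ext e
      rw [lintegral_sub_right_eq_self, lintegral_indicator (measurableSet_cube _)]

/-- The amalgam estimate for the convolution of nonnegative functions. -/
lemma amalgam_conv {d : ℕ} (p : ℝ) (hp : 1 < p) (F G : (Fin d → ℝ) → ℝ≥0∞)
    (hF : Measurable F) (hG : Measurable G) (hGt : ∫⁻ t, G t ≠ ⊤)
    (hFt : ∑' α : Fin d → ℤ, (∫⁻ x in cube α, F x ^ p) ^ (1 / p) ≠ ⊤) :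
    ∑' α : Fin d → ℤ, (∫⁻ x in cube α, (∫⁻ t, F (x - t) * G t) ^ p) ^ (1 / p) ≤
      2 ^ d * (∑' α : Fin d → ℤ, (∫⁻ x in cube α, F x ^ p) ^ (1 / p)) * ∫⁻ t, G t := by
  have hp0 : 0 < p := by linarith
  set N : (Fin d → ℤ) → ℝ≥0∞ := fun α => (∫⁻ x in cube α, F x ^ p) ^ (1 / p) with hN
  have hNt : ∀ α, N α ≠ ⊤ := fun α => ENNReal.ne_top_of_tsum_ne_top hFt α
  set c : (Fin d → ℤ) → (Fin d → ℝ) → ℝ≥0∞ :=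
    fun α t => ∑ e : Fin d → Fin 2, N (α - (fun i => ⌊t i⌋) - bits e) with hc
  have hcm : ∀ α, Measurable (c α) := by
    intro α
    have h1 : Measurable (fun β : Fin d → ℤ => ∑ e : Fin d → Fin 2, N (α - β - bits e)) :=
      measurable_of_countable _
    exact h1.comp (measurable_pi_lambda _ fun i => (measurable_pi_apply i).floor)
  set ν : Measure (Fin d → ℝ) := volume.withDensity G with hν
  haveI : IsFiniteMeasure ν := isFiniteMeasure_withDensity hGt
  have hsub : Measurable (fun z : (Fin d → ℝ) × (Fin d → ℝ) => F (z.1 - z.2)) :=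
    hF.comp (measurable_fst.sub measurable_snd)
  have step : ∀ α, (∫⁻ x in cube α, (∫⁻ t, F (x - t) * G t) ^ p) ^ (1 / p) ≤
      ∫⁻ t, c α t * G t := by
    intro α
    have h := mink_maj (volume.restrict (cube α)) ν p hp (fun x t => F (x - t)) hsub (c α)
      (hcm α) (fun t => by
        rw [hc]; exact ENNReal.sum_ne_top.2 fun e _ => hNt _) (fun t => by
        have h1 := shift_cube (fun x => F x ^ p) (hF.pow_const p) α t
        rw [← ENNReal.rpow_inv_le_iff hp0]
        calc _ ≤ _ := ENNReal.rpow_le_rpow h1 (by positivity : 0 ≤ p⁻¹)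
          _ ≤ _ := rpow_sum_le_aux _ _ _ (by positivity) (inv_le_one_of_one_le₀ hp.le)
          _ = c α t := by simp only [hc, hN, one_div])
    rw [hν, lintegral_withDensity_eq_lintegral_mul _ hG (hcm α)] at h
    have e : ∀ x, ∫⁻ t, F (x - t) ∂(volume.withDensity G) = ∫⁻ t, F (x - t) * G t := by
      intro x
      have hm : Measurable (fun t => F (x - t)) := hF.comp (measurable_id.const_sub x)
      rw [lintegral_withDensity_eq_lintegral_mul _ hG hm]
      simp [mul_comm]
    simp only [e] at h
    refine h.trans (le_of_eq ?_)
    congr 1; ext t; simp [mul_comm]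
  calc _ ≤ ∑' α : Fin d → ℤ, ∫⁻ t, c α t * G t := ENNReal.tsum_le_tsum step
    _ = ∫⁻ t, (∑' α : Fin d → ℤ, c α t) * G t := by
      have hm : ∀ α, AEMeasurable (fun t => c α t * G t) volume :=
        fun α => ((hcm α).mul hG).aemeasurable
      rw [← lintegral_tsum hm]
      simp only [ENNReal.tsum_mul_right]
    _ = ∫⁻ t, (2 ^ d * ∑' α, N α) * G t := by
      congr 1; ext t; congr 1
      simp only [hc]
      rw [Summable.tsum_finsetSum fun _ _ => ENNReal.summable]
      have : ∀ e : Fin d → Fin 2, ∑' α : Fin d → ℤ, N (α - (fun i => ⌊t i⌋) - bits e)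
          = ∑' α, N α := by
        intro e
        rw [← (Equiv.subRight ((fun i => ⌊t i⌋) + bits e)).tsum_eq N]
        simp [sub_sub]
      simp [this]
    _ = _ := by rw [lintegral_const_mul _ hG]

lemma integral_convF {d : ℕ} (f g : (Fin d → ℝ) → ℂ) (hf : Integrable f) (hg : Integrable g) :
    ∫ x, convF f g x = (∫ x, f x) * ∫ x, g x := by
  have h := integral_convolution (μ := volume) (ν := volume) (ContinuousLinearMap.mul ℝ ℂ) hg hf
  simp only [convolution, ContinuousLinearMap.mul_apply'] at h
  rw [mul_comm, ← h]
  simp only [convF, mul_comm]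

lemma norm_char {d : ℕ} (x ξ : Fin d → ℝ) :
    ‖Complex.exp (-(2 * (Real.pi : ℂ) * Complex.I * ∑ i, (x i : ℂ) * (ξ i : ℂ)))‖ = 1 := by
  have : (-(2 * (Real.pi : ℂ) * Complex.I * ∑ i, (x i : ℂ) * (ξ i : ℂ))) =
      ((-(2 * Real.pi * ∑ i, x i * ξ i) : ℝ) : ℂ) * Complex.I := by
    push_cast; ring
  rw [this, Complex.norm_exp_ofReal_mul_I]

lemma integrable_char {d : ℕ} (f : (Fin d → ℝ) → ℂ) (hf : Integrable f) (ξ : Fin d → ℝ) :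
    Integrable (fun x : Fin d → ℝ =>
      Complex.exp (-(2 * (Real.pi : ℂ) * Complex.I * ∑ i, (x i : ℂ) * (ξ i : ℂ))) * f x) := by
  refine hf.bdd_mul (c := 1) (Continuous.aestronglyMeasurable (by fun_prop)) ?_
  exact Eventually.of_forall fun x => (norm_char x ξ).le

lemma fourierT_convF {d : ℕ} (f g : (Fin d → ℝ) → ℂ) (hf : Integrable f) (hg : Integrable g)
    (ξ : Fin d → ℝ) : fourierT (convF f g) ξ = fourierT f ξ * fourierT g ξ := by
  have h := integral_convF _ _ (integrable_char f hf ξ) (integrable_char g hg ξ)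
  simp only [fourierT]
  rw [← h]
  congr 1; ext x
  simp only [convF]
  rw [← integral_const_mul]
  congr 1; ext t
  rw [mul_mul_mul_comm, ← Complex.exp_add, ← neg_add, ← mul_add, ← Finset.sum_add_distrib]
  congr 6; ext i
  simp; ring

lemma enorm_fourierT_le {d : ℕ} (g : (Fin d → ℝ) → ℂ) (ξ : Fin d → ℝ) :
    ‖fourierT g ξ‖ₑ ≤ ∫⁻ x, ‖g x‖ₑ := by
  refine (enorm_integral_le_lintegral_enorm _).trans (le_of_eq ?_)
  congr 1; ext x
  rw [enorm_mul]
  have : ‖Complex.exp (-(2 * (Real.pi : ℂ) * Complex.I * ∑ i, (x i : ℂ) * (ξ i : ℂ)))‖ₑ = 1 := by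
    rw [← ofReal_norm, norm_char]; simp
  rw [this, one_mul]

lemma measurable_convF {d : ℕ} (f g : (Fin d → ℝ) → ℂ) (hf : Measurable f) (hg : Measurable g) :
    Measurable (convF f g) := by
  have h : StronglyMeasurable
      (fun z : (Fin d → ℝ) × (Fin d → ℝ) => f (z.1 - z.2) * g z.2) :=
    ((hf.comp (measurable_fst.sub measurable_snd)).mul (hg.comp measurable_snd)).stronglyMeasurable
  exact h.integral_prod_right'.measurable

lemma measurable_fourierT {d : ℕ} (f : (Fin d → ℝ) → ℂ) (hf : Measurable f) :
    Measurable (fourierT f) := by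
  have h : StronglyMeasurable
      (fun z : (Fin d → ℝ) × (Fin d → ℝ) =>
        Complex.exp (-(2 * (Real.pi : ℂ) * Complex.I * ∑ i, (z.2 i : ℂ) * (z.1 i : ℂ))) * f z.2) := by
    refine Measurable.stronglyMeasurable (Measurable.mul ?_ (hf.comp measurable_snd))
    exact Continuous.measurable (by fun_prop)
  exact h.integral_prod_right'.measurable

lemma eLpNorm_cube {d : ℕ} (p : ℝ) (hp : 1 < p) (h : (Fin d → ℝ) → ℂ) (α : Fin d → ℤ) :
    eLpNorm h (ENNReal.ofReal p) (volume.restrict (cube α)) =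
      (∫⁻ x in cube α, ‖h x‖ₑ ^ p) ^ (1 / p) := by
  have hp0 : 0 < p := by linarith
  rw [eLpNorm_eq_lintegral_rpow_enorm_toReal (by simpa using hp0) ENNReal.ofReal_ne_top,
    ENNReal.toReal_ofReal hp0.le]

lemma amalgamNorm_one {d : ℕ} (p : ℝ) (hp : 1 < p) (ω : (Fin d → ℝ) → ℝ)
    (f : (Fin d → ℝ) → ℂ) : amalgamNorm p 1 ω f =
      ∑' α : Fin d → ℤ, (∫⁻ x in cube α, ‖ω x • f x‖ₑ ^ p) ^ (1 / p) := by
  simp only [amalgamNorm, eLpNorm_cube p hp, div_one, ENNReal.rpow_one]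

lemma enorm_weight_ge {d : ℕ} (ϑ : (Fin d → ℝ) → ℝ) (h : IsBeurling ϑ)
    (g : (Fin d → ℝ) → ℂ) (x : Fin d → ℝ) : ‖g x‖ₑ ≤ ‖ϑ x • g x‖ₑ := by
  rw [enorm_smul]
  have : (1 : ℝ≥0∞) ≤ ‖ϑ x‖ₑ := by
    rw [Real.enorm_of_nonneg (by linarith [h.2.1 x])]
    simpa using h.2.1 x
  calc ‖g x‖ₑ = 1 * ‖g x‖ₑ := (one_mul _).symm
    _ ≤ _ := by gcongr

lemma lintegral_le_amalgam {d : ℕ} (p : ℝ) (hp : 1 < p) (ϑ : (Fin d → ℝ) → ℝ)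
    (hϑ : IsBeurling ϑ) (f : (Fin d → ℝ) → ℂ) (hf : Measurable f) :
    ∫⁻ x, ‖f x‖ₑ ≤ amalgamNorm p 1 ϑ f := by
  rw [lintegral_eq_tsum_cube]
  simp only [amalgamNorm, div_one, ENNReal.rpow_one]
  refine ENNReal.tsum_le_tsum fun α => ?_
  haveI : IsProbabilityMeasure (volume.restrict (cube α)) :=
    ⟨by rw [Measure.restrict_apply_univ, volume_cube]⟩
  have hm : Measurable (fun x => ϑ x • f x) := hϑ.1.smul hf
  calc ∫⁻ x in cube α, ‖f x‖ₑ ≤ ∫⁻ x in cube α, ‖ϑ x • f x‖ₑ :=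
        lintegral_mono fun x => enorm_weight_ge ϑ hϑ f x
    _ = eLpNorm (fun x => ϑ x • f x) 1 (volume.restrict (cube α)) :=
        eLpNorm_one_eq_lintegral_enorm.symm
    _ ≤ _ := eLpNorm_le_eLpNorm_of_exponent_le (by simpa using hp.le) hm.aestronglyMeasurable

lemma amalgamNorm_mul_le {d : ℕ} (q r : ℝ) (hq : 1 < q) (hr : 1 < r) (ω : (Fin d → ℝ) → ℝ)
    (u h : (Fin d → ℝ) → ℂ) (hω : Measurable ω) (hu : Measurable u) (M : ℝ≥0∞)
    (hh : ∀ x, ‖h x‖ₑ ≤ ‖u x‖ₑ * M) :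
    amalgamNorm q r ω h ≤ amalgamNorm q r ω u * M := by
  have hr0 : 0 < r := by linarith
  have hq0 : 0 < q := by linarith
  have hm : Measurable (fun x => ω x • u x) := hω.smul hu
  have e : M = (M ^ r) ^ (1 / r) := by
    rw [← ENNReal.rpow_mul]
    have : r * (1 / r) = 1 := by field_simp
    rw [this, ENNReal.rpow_one]
  have e' : M = (M ^ q) ^ (1 / q) := by
    rw [← ENNReal.rpow_mul]
    have : q * (1 / q) = 1 := by field_simp
    rw [this, ENNReal.rpow_one]
  simp only [amalgamNorm]
  conv_rhs => rw [e]
  rw [← ENNReal.mul_rpow_of_nonneg _ _ (by positivity), ← ENNReal.tsum_mul_right]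
  refine ENNReal.rpow_le_rpow (ENNReal.tsum_le_tsum fun α => ?_) (by positivity)
  rw [← ENNReal.mul_rpow_of_nonneg _ _ hr0.le]
  refine ENNReal.rpow_le_rpow ?_ hr0.le
  rw [eLpNorm_cube q hq, eLpNorm_cube q hq]
  conv_rhs => rw [e']
  rw [← ENNReal.mul_rpow_of_nonneg _ _ (by positivity),
    ← lintegral_mul_const _ (hm.enorm.pow_const q)]
  refine ENNReal.rpow_le_rpow (lintegral_mono fun x => ?_) (by positivity)
  rw [← ENNReal.mul_rpow_of_nonneg _ _ hq0.le]
  refine ENNReal.rpow_le_rpow ?_ hq0.le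
  rw [enorm_smul, enorm_smul, mul_assoc]
  gcongr
  exact hh x

/-- if `ϑ₁ ≺ ϑ₀` and `1 < p,q,r < ∞`, then `A^{p,1,q,r}_{ϑ₁,ϑ₂}(ℝ^d)`
is a Banach `L¹_{ϑ₀}(ℝ^d)`-module under convolution. -/
theorem A_banach_module {d : ℕ} (p q r : ℝ) (hp : 1 < p) (hq : 1 < q) (hr : 1 < r)
    (ϑ₀ ϑ₁ ϑ₂ : (Fin d → ℝ) → ℝ) (h0 : IsBeurling ϑ₀) (h1 : IsBeurling ϑ₁)
    (h2 : IsBeurling ϑ₂) (hprec : Prec ϑ₁ ϑ₀) :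
    ∃ C : ℝ, 0 < C ∧ ∀ f g : (Fin d → ℝ) → ℂ,
      MemA p q r ϑ₁ ϑ₂ f → Measurable g →
      eLpNorm (fun x => ϑ₀ x • g x) 1 volume < ⊤ →
        MemA p q r ϑ₁ ϑ₂ (convF f g) ∧
        ANorm p q r ϑ₁ ϑ₂ (convF f g) ≤
          ENNReal.ofReal C * ANorm p q r ϑ₁ ϑ₂ f *
            eLpNorm (fun x => ϑ₀ x • g x) 1 volume := by
  obtain ⟨C0, hC0, hC⟩ := hprec
  refine ⟨2 ^ d * C0 + 1, by positivity, ?_⟩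
  intro f g hf hg hgt
  obtain ⟨⟨hfm, hfa⟩, ⟨hFm, hFa⟩⟩ := hf
  have hp0 : 0 < p := by linarith
  set B := eLpNorm (fun x => ϑ₀ x • g x) 1 volume with hB
  have hB' : B = ∫⁻ x, ‖ϑ₀ x • g x‖ₑ := eLpNorm_one_eq_lintegral_enorm
  have hgB : ∫⁻ x, ‖g x‖ₑ ≤ B := by
    rw [hB']; exact lintegral_mono fun x => enorm_weight_ge ϑ₀ h0 g x
  have hfi : Integrable f :=
    ⟨hfm.aestronglyMeasurable, (lintegral_le_amalgam p hp ϑ₁ h1 f hfm).trans_lt hfa⟩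
  have hgi : Integrable g := ⟨hg.aestronglyMeasurable, hgB.trans_lt hgt⟩
  -- the Fourier side
  have hF : amalgamNorm q r ϑ₂ (fourierT (convF f g)) ≤ amalgamNorm q r ϑ₂ (fourierT f) * B := by
    refine amalgamNorm_mul_le q r hq hr ϑ₂ _ _ h2.1 hFm B fun ξ => ?_
    rw [fourierT_convF f g hfi hgi, enorm_mul]
    gcongr
    exact (enorm_fourierT_le g ξ).trans hgB
  -- the function side
  have hmF : Measurable (fun x => ‖ϑ₁ x • f x‖ₑ) := (h1.1.smul hfm).enorm
  have hmG : Measurable (fun x => ‖ϑ₁ x • g x‖ₑ) := (h1.1.smul hg).enorm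
  have hGB : ∫⁻ x, ‖ϑ₁ x • g x‖ₑ ≤ ENNReal.ofReal C0 * B := by
    have hm : Measurable (fun x => ‖ϑ₀ x • g x‖ₑ) := (h0.1.smul hg).enorm
    rw [hB', ← lintegral_const_mul _ hm]
    refine lintegral_mono fun x => ?_
    simp only
    rw [enorm_smul, enorm_smul, ← mul_assoc]
    gcongr
    rw [Real.enorm_of_nonneg (by linarith [h1.2.1 x]), Real.enorm_of_nonneg (by linarith [h0.2.1 x]),
      ← ENNReal.ofReal_mul hC0.le]
    exact ENNReal.ofReal_le_ofReal (hC x)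
  have hGt : ∫⁻ x, ‖ϑ₁ x • g x‖ₑ ≠ ⊤ :=
    (hGB.trans_lt (ENNReal.mul_lt_top ENNReal.ofReal_lt_top hgt)).ne
  have hA : amalgamNorm p 1 ϑ₁ (convF f g) ≤
      2 ^ d * amalgamNorm p 1 ϑ₁ f * (ENNReal.ofReal C0 * B) := by
    have hfa' := hfa.ne
    rw [amalgamNorm_one p hp] at hfa' ⊢
    rw [amalgamNorm_one p hp]
    have h := amalgam_conv p hp _ _ hmF hmG hGt hfa'
    refine le_trans (ENNReal.tsum_le_tsum fun α => ?_) (h.trans (by gcongr))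
    refine ENNReal.rpow_le_rpow (lintegral_mono fun x => ?_) (by positivity)
    refine ENNReal.rpow_le_rpow ?_ hp0.le
    rw [convF, ← integral_smul]
    refine (enorm_integral_le_lintegral_enorm _).trans (lintegral_mono fun t => ?_)
    simp only
    rw [enorm_smul, enorm_smul, enorm_smul, enorm_mul, mul_mul_mul_comm]
    gcongr
    have k := h1.2.2 (x - t) t
    rw [sub_add_cancel] at k
    rw [Real.enorm_of_nonneg (by linarith [h1.2.1 x]),
      Real.enorm_of_nonneg (zero_le_one.trans (h1.2.1 t)),
      Real.enorm_of_nonneg (zero_le_one.trans (h1.2.1 (x - t))),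
      ← ENNReal.ofReal_mul (by linarith [h1.2.1 (x - t)])]
    exact ENNReal.ofReal_le_ofReal k
  have hcm := measurable_convF f g hfm hg
  refine ⟨⟨⟨hcm, hA.trans_lt ?_⟩, ⟨measurable_fourierT _ hcm, hF.trans_lt ?_⟩⟩, ?_⟩
  · exact ENNReal.mul_lt_top (ENNReal.mul_lt_top (by simp) hfa)
      (ENNReal.mul_lt_top ENNReal.ofReal_lt_top hgt)
  · exact ENNReal.mul_lt_top hFa hgt
  · have hofC : ENNReal.ofReal (2 ^ d * C0 + 1) = 2 ^ d * ENNReal.ofReal C0 + 1 := by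
      rw [ENNReal.ofReal_add (by positivity) (by norm_num), ENNReal.ofReal_mul (by positivity),
        ENNReal.ofReal_pow (by norm_num)]
      simp
    rw [hofC]
    simp only [ANorm]
    calc _ ≤ _ := add_le_add hA hF
      _ ≤ (2 ^ d * amalgamNorm p 1 ϑ₁ f * (ENNReal.ofReal C0 * B) +
            amalgamNorm q r ϑ₂ (fourierT f) * B) +
          (amalgamNorm p 1 ϑ₁ f * B +
            2 ^ d * ENNReal.ofReal C0 * amalgamNorm q r ϑ₂ (fourierT f) * B) := le_self_add
      _ = _ := by ring
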